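/- Let (X, d) be a compact metric space and let f : X → X be a homeomorphism satisfying the specification property. Then for every ε > 0 there exists a positive integer N such that for all points x, q ∈ X there exists a point z ∈ X satisfying both d(f^{-n}(f^{-N}(z)), f^{-n}(x)) ≤ ε for all n ≥ 0 and d(f^{n}(z), f^{n}(q)) ≤ ε for all n ≥ 0. Equivalently, the intersection ⋂_{n ≥ 1} ( f^N(B_{[-n,0]}(x, ε)) ∩ B_{[0,n]}(q, ε) ) is nonempty. -/

import Mathlib

/-! For a fixed `M`, the specification property applied to the intervals `[-N - M, -N]` (along the
orbit of `f ^ N x`) and `[0, M]` (along the orbit of `q`) yields a point satisfying the required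
inequalities for all `n ≤ M`. The gap `N` depends on `ε` alone, so the sets of such points form a
decreasing sequence of nonempty closed subsets of the compact space `X`, and any point of their
intersection works. -/

open Filter Topology

/-- The specification property for a homeomorphism `f` of a metric space. -/
def SpecProp {X : Type*} [MetricSpace X] (f : X ≃ₜ X) : Prop :=
  ∀ ε : ℝ, 0 < ε → ∃ N : ℕ, 0 < N ∧
    ∀ (k : ℕ) (m n : ℕ → ℤ) (xs : ℕ → X),
      (∀ j < k, m j ≤ n j) →
      (∀ i < k, ∀ j < k, i ≠ j →
        ∀ a ∈ Set.Icc (m i) (n i), ∀ b ∈ Set.Icc (m j) (n j), (N : ℤ) ≤ |a - b|) →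
      ∃ x : X, ∀ j < k, ∀ i ∈ Set.Icc (m j) (n j),
        dist ((f.toEquiv ^ i) x) ((f.toEquiv ^ i) (xs j)) ≤ ε

theorem continuous_toEquiv_zpow {X : Type*} [TopologicalSpace X] (f : X ≃ₜ X) (i : ℤ) :
    Continuous (f.toEquiv ^ i : Equiv.Perm X) := by
  induction i with
  | zero => simpa using continuous_id
  | succ n ih =>
    rw [zpow_add_one]
    exact ih.comp f.continuous
  | pred n ih =>
    rw [zpow_sub_one]
    exact ih.comp f.symm.continuous

/-- if `f` satisfies the specification property then for every `ε > 0` there is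
a positive integer `N` such that for all `x, q` there exists `z` whose backward orbit
shifted by `N` shadows the backward orbit of `x` and whose forward orbit shadows the forward
orbit of `q`, within `ε`. -/
theorem glue_backward_forward {X : Type*} [MetricSpace X] [CompactSpace X]
    (f : X ≃ₜ X) (hf : SpecProp f) :
    ∀ ε : ℝ, 0 < ε → ∃ N : ℕ, 0 < N ∧
      ∀ x q : X, ∃ z : X,
        (∀ n : ℕ,
          dist ((f.toEquiv ^ (-(n : ℤ))) ((f.toEquiv ^ (-(N : ℤ))) z))
            ((f.toEquiv ^ (-(n : ℤ))) x) ≤ ε) ∧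
        (∀ n : ℕ, dist ((f.toEquiv ^ (n : ℤ)) z) ((f.toEquiv ^ (n : ℤ)) q) ≤ ε) := by
  intro ε hε
  obtain ⟨N, hN, hspec⟩ := hf ε hε
  refine ⟨N, hN, fun x q => ?_⟩
  let K : ℕ → Set X := fun M => {z | ∀ n ≤ M,
    dist ((f.toEquiv ^ (-(n : ℤ))) ((f.toEquiv ^ (-(N : ℤ))) z))
      ((f.toEquiv ^ (-(n : ℤ))) x) ≤ ε ∧
    dist ((f.toEquiv ^ (n : ℤ)) z) ((f.toEquiv ^ (n : ℤ)) q) ≤ ε}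
  have hclosed : ∀ M, IsClosed (K M) := by
    intro M
    simp only [K, Set.ofPred_forall, Set.ofPred_and]
    refine isClosed_iInter fun n => isClosed_iInter fun _ => IsClosed.inter ?_ ?_
    · exact isClosed_le (((continuous_toEquiv_zpow f _).comp
        (continuous_toEquiv_zpow f _)).dist continuous_const) continuous_const
    · exact isClosed_le ((continuous_toEquiv_zpow f _).dist continuous_const) continuous_const
  have hne : ∀ M, (K M).Nonempty := by
    intro M
    obtain ⟨z, hz⟩ := hspec 2 (fun j => if j = 0 then -(N : ℤ) - M else 0)
      (fun j => if j = 0 then -(N : ℤ) else M)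
      (fun j => if j = 0 then (f.toEquiv ^ (N : ℤ)) x else q)
      (by intro j _; split_ifs <;> omega)
      (by
        intro i hi j hj hij a ha b hb
        rw [le_abs]
        obtain ⟨rfl, rfl⟩ | ⟨rfl, rfl⟩ : (i = 0 ∧ j = 1) ∨ (i = 1 ∧ j = 0) := by omega
        all_goals
          simp only [Set.mem_Icc, if_true, one_ne_zero, if_false] at ha hb
          omega)
    refine ⟨z, fun n hn => ⟨?_, ?_⟩⟩
    · have h := hz 0 (by norm_num) (-(n : ℤ) + -(N : ℤ)) (by
        simp only [Set.mem_Icc, if_true]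
        omega)
      simp only [if_true] at h
      rw [← Equiv.Perm.mul_apply, ← zpow_add] at h
      rw [← Equiv.Perm.mul_apply, ← zpow_add]
      rwa [neg_add_cancel_right] at h
    · have h := hz 1 (by norm_num) (n : ℤ) (by
        simp only [Set.mem_Icc, one_ne_zero, if_false]
        omega)
      simpa only [one_ne_zero, if_false] using h
  obtain ⟨z, hz⟩ := IsCompact.nonempty_iInter_of_sequence_nonempty_isCompact_isClosed K
    (fun M z hz n hn => hz n (by omega)) hne (hclosed 0).isCompact hclosed
  rw [Set.mem_iInter] at hz
  exact ⟨z, fun n => (hz n n le_rfl).1, fun n => (hz n n le_rfl).2⟩
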